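/- Fix r ∈ (0,1), a unit vector y ∈ ℝ^d, λ ∈ (2r-1, 1) with λ > 0, and n ∈ ℕ with n ≥ 2, and set η := 2·sqrt(log n). For each m, with margins ε⁻ = ε⁺ = ε_m(λ,η,r), let N_I(X) and N_II(X) denote the numbers of type I and type II errors for a corpus X of unit vectors with |X| = n. Then lim_{m→∞} sup_{|X|=n} (E[N_I(X)] + E[N_II(X)])/n ≤ 1/(n²·sqrt(8π log n)). -/

import Mathlib

open MeasureTheory ProbabilityTheory Filter Topology

noncomputable section

/-- Centered bivariate Gaussian pair `(w, v)` in which `w` and `v` are each standard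
normal and `E[w v] = lam`, realized as the law of `(z₁, lam·z₁ + √(1-lam²)·z₂)`
for independent standard normals `z₁, z₂`. -/
def gaussPair (lam : ℝ) : Measure (ℝ × ℝ) :=
  Measure.map (fun z : ℝ × ℝ => (z.1, lam * z.1 + Real.sqrt (1 - lam ^ 2) * z.2))
    ((gaussianReal 0 1).prod (gaussianReal 0 1))

/-- `μ(λ,h) = P(w ≥ h ∧ v ≥ h)`. -/
def mu (lam h : ℝ) : ℝ := (gaussPair lam {p : ℝ × ℝ | h ≤ p.1 ∧ h ≤ p.2}).toReal

/-- `σ(λ,h) = sqrt(μ(λ,h)(1-μ(λ,h)))`. -/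
def sigma' (lam h : ℝ) : ℝ := Real.sqrt (mu lam h * (1 - mu lam h))

/-- The threshold `h_m = sqrt(2 r log m)`. -/
def hthr (r : ℝ) (m : ℕ) : ℝ := Real.sqrt (2 * r * Real.log m)

/-- `μ_m(λ) = μ(λ, h_m)`. -/
def muM (r : ℝ) (m : ℕ) (lam : ℝ) : ℝ := mu lam (hthr r m)

/-- `σ_m(λ) = σ(λ, h_m)`. -/
def sigM (r : ℝ) (m : ℕ) (lam : ℝ) : ℝ := sigma' lam (hthr r m)

/-- Canonical probability space carrying `m` i.i.d. random vectors in `ℝ^d`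
whose coordinates are i.i.d. standard normal: `a_i ω := ω i`. -/
def Prob (d m : ℕ) : Measure (Fin m → Fin d → ℝ) :=
  Measure.pi fun _ => Measure.pi fun _ : Fin d => gaussianReal 0 1

/-- Euclidean inner product on `ℝ^d`. -/
def dotp {d : ℕ} (a x : Fin d → ℝ) : ℝ := ∑ j, a j * x j

/-- `x` lies on the unit sphere `S^{d-1}`. -/
def unitVec {d : ℕ} (x : Fin d → ℝ) : Prop := ∑ j, x j ^ 2 = 1

/-- The score `S_m(x,y) = (1/m) ∑_i 1[⟨a_i,x⟩ ≥ h_m]·1[⟨a_i,y⟩ ≥ h_m]`. -/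
def score (d m : ℕ) (r : ℝ) (x y : Fin d → ℝ) (ω : Fin m → Fin d → ℝ) : ℝ :=
  (1 / (m : ℝ)) * ∑ i, (if hthr r m ≤ dotp (ω i) x then (1 : ℝ) else 0) *
    (if hthr r m ≤ dotp (ω i) y then (1 : ℝ) else 0)

/-- The standard normal cumulative distribution function `Φ`. -/
def Phi (t : ℝ) : ℝ := (gaussianReal 0 1 (Set.Iic t)).toReal

/-- The standard normal upper tail `P(N(0,1) ≥ t)`. -/
def gaussTail (t : ℝ) : ℝ := (gaussianReal 0 1 {z : ℝ | t ≤ z}).toReal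

/-- `ε_m(λ,η,r) = C(λ,r,m,η)·m^{-(λ-(2r-1))/(2(1+λ))}` with
`C = √(2π)·(1+λ)·(1-λ²)^{1/4}·η/√(2r log m)`. -/
def epsm (r lam eta : ℝ) (m : ℕ) : ℝ :=
  (Real.sqrt (2 * Real.pi) * (1 + lam) * (1 - lam ^ 2) ^ ((1 : ℝ) / 4) * eta /
    Real.sqrt (2 * r * Real.log m)) * (m : ℝ) ^ (-(lam - (2 * r - 1)) / (2 * (1 + lam)))

/-- Number of type I errors: documents `x` of the corpus with `⟨x,y⟩ ≤ λ - ε⁻`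
that are retrieved, i.e. `S_m(x,y) ≥ μ_m(λ)`. -/
def NI (d m n : ℕ) (r lam em : ℝ) (y : Fin d → ℝ) (X : Fin n → Fin d → ℝ)
    (ω : Fin m → Fin d → ℝ) : ℝ :=
  ∑ i, if dotp (X i) y ≤ lam - em ∧ muM r m lam ≤ score d m r (X i) y ω then 1 else 0

/-- Number of type II errors: documents `x` of the corpus with `⟨x,y⟩ ≥ λ + ε⁺`
that are not retrieved, i.e. `S_m(x,y) < μ_m(λ)`. -/
def NII (d m n : ℕ) (r lam ep : ℝ) (y : Fin d → ℝ) (X : Fin n → Fin d → ℝ)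
    (ω : Fin m → Fin d → ℝ) : ℝ :=
  ∑ i, if lam + ep ≤ dotp (X i) y ∧ ¬ muM r m lam ≤ score d m r (X i) y ω then 1 else 0

/-!
For a document `x` with `⟨x, y⟩ = q`, the variable `m · S_m(x, y)` is binomial with parameters `m`
and `μ_m(q)`. Binomial laws are stochastically monotone in their parameter and `μ_m` is monotone on
`[-1, 1]`, so the error probabilities of every document are dominated by those at `q = λ ± ε_m`.

There the threshold `m μ_m(λ)` lies `m |μ_m(λ) - μ_m(q)| / √(m μ_m(q) (1 - μ_m(q)))` standard
deviations away from the mean. Let `D(λ, h)` be the density of the Gaussian pair at `(h, h)`.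
Plackett's identity `∂μ/∂λ = D` and the mean value theorem give the numerator `m ε_m D(c, h_m)`,
and Savage's inequality `μ(q, h) ≤ ((1 + q) / h)² D(q, h)` bounds the denominator. Since
`ε_m h_m² → 0`, the densities at `c`, `q` and `λ` are asymptotically equal; `ε_m` is exactly the
margin at which the resulting lower bound for the quotient tends to `η`.

The condition `λ > 2r - 1` makes the variance `m μ_m(q) (1 - μ_m(q))` tend to infinity, so the
standardised binomial laws converge to the standard normal one, and the limiting error
probabilities are at most `P(N(0,1) ≥ η)`. At `η = 2√(log n)`, Mills' inequality bounds this tail by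
the right-hand side.
-/

section Binomial

lemma charFun_map_cast_binomial (m : ℕ) (p : unitInterval) (t : ℝ) :
    charFun Bin(ℝ, m, p) t = (1 - p + p * Complex.exp (t * Complex.I)) ^ m := by
  rw [charFun_apply_real, integral_map_cast_binomial, add_comm, add_pow, Nat.range_succ_eq_Iic]
  refine Finset.sum_congr rfl fun k _ ↦ ?_
  rw [mul_pow, ← Complex.exp_nat_mul, Complex.real_smul]
  push_cast
  ring_nf

/-- The law of the standardised binomial variable `(N - m p) / √(m p (1 - p))`, where
`N` is binomial with parameters `m` and `p`. -/
def stdBinomial (m : ℕ) (p : unitInterval) : Measure ℝ :=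
  Bin(ℝ, m, p).map fun x ↦ (x - m * p) / √(m * (p * (1 - p)))

instance (m : ℕ) (p : unitInterval) : IsProbabilityMeasure (stdBinomial m p) :=
  Measure.isProbabilityMeasure_map (by fun_prop)

/-- The characteristic function of the centred Bernoulli distribution with parameter `p`. -/
def centeredBernoulliCharFun (p a : ℝ) : ℂ :=
  (1 - p) * Complex.exp (((-(a * p) : ℝ) : ℂ) * Complex.I) +
    p * Complex.exp (((a * (1 - p) : ℝ) : ℂ) * Complex.I)

lemma charFun_stdBinomial (m : ℕ) (p : unitInterval) (t : ℝ) :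
    charFun (stdBinomial m p) t =
      centeredBernoulliCharFun p (t / √(m * (p * (1 - p)))) ^ m := by
  set s := √(m * (p * (1 - p) : ℝ)) with hs
  have hmap : stdBinomial m p = (Bin(ℝ, m, p).map (· + -(m * p : ℝ))).map (s⁻¹ * ·) := by
    rw [Measure.map_map (by fun_prop) (by fun_prop)]
    refine congrArg (Measure.map · _) (funext fun x ↦ ?_)
    simp only [Function.comp_apply, hs]
    ring
  have hexp : Complex.exp ((inner ℝ (-(m * p : ℝ)) (s⁻¹ * t) : ℝ) * Complex.I) =
      Complex.exp (((-(t / s * p) : ℝ) : ℂ) * Complex.I) ^ m := by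
    rw [← Complex.exp_nat_mul, RCLike.inner_apply]
    congr 1
    push_cast [conj_trivial]
    ring
  have hsplit : ((t / s * (1 - p) : ℝ) : ℂ) * Complex.I =
      ((-(t / s * p) : ℝ) : ℂ) * Complex.I + ((s⁻¹ * t : ℝ) : ℂ) * Complex.I := by
    push_cast
    ring
  rw [hmap, charFun_map_mul, charFun_map_add_const, charFun_map_cast_binomial, hexp,
    centeredBernoulliCharFun, ← mul_pow, hsplit, Complex.exp_add]
  ring

lemma norm_exp_mul_I_sub_le {x : ℝ} (hx : |x| ≤ 1) :
    ‖Complex.exp (x * Complex.I) - (1 + x * Complex.I - x ^ 2 / 2)‖ ≤ |x| ^ 3 := by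
  have hnorm : ‖(x : ℂ) * Complex.I‖ = |x| := by simp
  have h := Complex.exp_bound (hnorm.trans_le hx) three_pos
  have hsum : ∑ k ∈ Finset.range 3, ((x : ℂ) * Complex.I) ^ k / k.factorial =
      1 + x * Complex.I - x ^ 2 / 2 := by
    simp only [Finset.sum_range_succ, Finset.range_one, Finset.sum_singleton, mul_pow, pow_zero,
      pow_one, Complex.I_sq, Nat.factorial_zero, Nat.factorial_one, Nat.factorial_two, Nat.cast_one,
      Nat.cast_ofNat]
    ring
  rw [hnorm, hsum] at h
  refine h.trans (mul_le_of_le_one_right (by positivity) ?_)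
  norm_num [Nat.factorial]

lemma norm_centeredBernoulliCharFun_sub_le {p a : ℝ} (hp : p ∈ Set.Icc 0 1) (ha : |a| ≤ 1) :
    ‖centeredBernoulliCharFun p a - (1 - p * (1 - p) * a ^ 2 / 2)‖ ≤ p * (1 - p) * |a| ^ 3 := by
  obtain ⟨hp0, hp1⟩ := hp
  have hq0 : 0 ≤ 1 - p := sub_nonneg.2 hp1
  have habs : |(-(a * p))| = |a| * p := by rw [abs_neg, abs_mul, abs_of_nonneg hp0]
  have habs' : |a * (1 - p)| = |a| * (1 - p) := by rw [abs_mul, abs_of_nonneg hq0]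
  have h₁ := norm_exp_mul_I_sub_le (x := -(a * p)) (by rw [habs]; nlinarith [abs_nonneg a])
  have h₂ := norm_exp_mul_I_sub_le (x := a * (1 - p)) (by rw [habs']; nlinarith [abs_nonneg a])
  have hsplit : centeredBernoulliCharFun p a - (1 - p * (1 - p) * a ^ 2 / 2) =
      ((1 - p : ℝ) : ℂ) * (Complex.exp (((-(a * p) : ℝ) : ℂ) * Complex.I) -
        (1 + ((-(a * p) : ℝ) : ℂ) * Complex.I - ((-(a * p) : ℝ) : ℂ) ^ 2 / 2)) +
      (p : ℂ) * (Complex.exp (((a * (1 - p) : ℝ) : ℂ) * Complex.I) -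
        (1 + ((a * (1 - p) : ℝ) : ℂ) * Complex.I - ((a * (1 - p) : ℝ) : ℂ) ^ 2 / 2)) := by
    rw [centeredBernoulliCharFun]
    push_cast
    ring
  rw [hsplit]
  calc _ ≤ (1 - p) * (|a| * p) ^ 3 + p * (|a| * (1 - p)) ^ 3 := by
        refine (norm_add_le _ _).trans ?_
        rw [norm_mul, norm_mul, Complex.norm_of_nonneg hq0, Complex.norm_of_nonneg hp0,
          ← habs, ← habs']
        gcongr
    _ = p * (1 - p) * |a| ^ 3 * (1 - 2 * (p * (1 - p))) := by ring
    _ ≤ p * (1 - p) * |a| ^ 3 := mul_le_of_le_one_right (by positivity) (by nlinarith)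

lemma norm_mul_centeredBernoulliCharFun_sub_le {m : ℕ} {p t : ℝ} (hp : p ∈ Set.Icc 0 1)
    (hm : 0 < m * (p * (1 - p))) (ht : |t| ≤ √(m * (p * (1 - p)))) :
    ‖(m : ℂ) * (centeredBernoulliCharFun p (t / √(m * (p * (1 - p)))) - 1) - (-t ^ 2 / 2 : ℝ)‖ ≤
      |t| ^ 3 / √(m * (p * (1 - p))) := by
  set s := √(m * (p * (1 - p)))
  have hs0 : 0 < s := Real.sqrt_pos.2 hm
  have hsq : s ^ 2 = m * (p * (1 - p)) := Real.sq_sqrt hm.le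
  have habs : |t / s| = |t| / s := by rw [abs_div, abs_of_pos hs0]
  have h := norm_centeredBernoulliCharFun_sub_le hp (a := t / s)
    (habs.trans_le ((div_le_one hs0).2 ht))
  have hsplit : (m : ℂ) * (centeredBernoulliCharFun p (t / s) - 1) - (-t ^ 2 / 2 : ℝ) =
      m * (centeredBernoulliCharFun p (t / s) -
        (1 - p * (1 - p) * ((t / s : ℝ) : ℂ) ^ 2 / 2)) := by
    have hone : (m : ℝ) * (p * (1 - p)) * (t / s) ^ 2 = t ^ 2 := by
      rw [← hsq]; field_simp
    rw [← hone]
    push_cast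
    ring
  rw [hsplit, norm_mul, Complex.norm_natCast]
  calc _ ≤ (m : ℝ) * (p * (1 - p) * |t / s| ^ 3) := by gcongr
    _ = s ^ 2 * (|t| / s) ^ 3 := by rw [habs, hsq]; ring
    _ = |t| ^ 3 / s := by field_simp

theorem tendsto_stdBinomial {p : ℕ → unitInterval}
    (hp : Tendsto (fun m : ℕ ↦ m * (p m * (1 - p m) : ℝ)) atTop atTop) :
    Tendsto (β := ProbabilityMeasure ℝ) (fun m ↦ ⟨stdBinomial m (p m), inferInstance⟩) atTop
      (𝓝 ⟨gaussianReal 0 1, inferInstance⟩) := by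
  refine ProbabilityMeasure.tendsto_of_tendsto_charFun fun t ↦ ?_
  simp only [ProbabilityMeasure.coe_mk, charFun_stdBinomial]
  have hs := Real.tendsto_sqrt_atTop.comp hp
  have hlim : Tendsto (fun m : ℕ ↦ (m : ℂ) * (centeredBernoulliCharFun (p m)
      (t / √(m * (p m * (1 - p m)))) - 1)) atTop (𝓝 (-t ^ 2 / 2 : ℝ)) := by
    refine tendsto_sub_nhds_zero_iff.1 (squeeze_zero_norm' ?_ (hs.const_div_atTop (|t| ^ 3)))
    filter_upwards [hp.eventually_gt_atTop 0, hs.eventually_ge_atTop |t|] with m hm ht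
    exact norm_mul_centeredBernoulliCharFun_sub_le (p m).2 hm ht
  convert! Complex.tendsto_one_add_pow_exp_of_tendsto hlim using 2
  · simp
  · rw [charFun_gaussianReal]
    congr 1
    push_cast
    ring

lemma tendsto_real_stdBinomial {p : ℕ → unitInterval}
    (hp : Tendsto (fun m : ℕ ↦ m * (p m * (1 - p m) : ℝ)) atTop atTop)
    {s : Set ℝ} (hs : (frontier s).Countable) :
    Tendsto (fun m ↦ (stdBinomial m (p m)).real s) atTop (𝓝 ((gaussianReal 0 1).real s)) := by
  have hnull : gaussianReal 0 1 (frontier s) = 0 :=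
    have := nullSingletonClass_gaussianReal (μ := 0) one_ne_zero
    hs.measure_zero _
  exact (ENNReal.tendsto_toReal (measure_ne_top _ _)).comp
    (ProbabilityMeasure.tendsto_measure_of_null_frontier_of_tendsto' (tendsto_stdBinomial hp) hnull)

lemma real_stdBinomial_Ici {m : ℕ} {p : unitInterval} (hm : 0 < m * (p * (1 - p) : ℝ)) (c : ℝ) :
    (stdBinomial m p).real (Set.Ici ((c - m * p) / √(m * (p * (1 - p))))) =
      Bin(ℝ, m, p).real (Set.Ici c) := by
  rw [stdBinomial, map_measureReal_apply (by fun_prop) measurableSet_Ici]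
  congr 1 with x
  rw [Set.mem_preimage, Set.mem_Ici, Set.mem_Ici, div_le_div_iff_of_pos_right (Real.sqrt_pos.2 hm),
    sub_le_sub_iff_right]

lemma real_stdBinomial_Iio {m : ℕ} {p : unitInterval} (hm : 0 < m * (p * (1 - p) : ℝ)) (c : ℝ) :
    (stdBinomial m p).real (Set.Iio ((c - m * p) / √(m * (p * (1 - p))))) =
      Bin(ℝ, m, p).real (Set.Iio c) := by
  rw [stdBinomial, map_measureReal_apply (by fun_prop) measurableSet_Iio]
  congr 1 with x
  rw [Set.mem_preimage, Set.mem_Iio, Set.mem_Iio, div_lt_div_iff_of_pos_right (Real.sqrt_pos.2 hm),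
    sub_lt_sub_iff_right]

lemma map_sum_indicator_pi_eq_binomial {α : Type*} [MeasurableSpace α] (ν : Measure α)
    [IsProbabilityMeasure ν] {A : Set α} (hA : MeasurableSet A) {p : unitInterval}
    (hp : ν.real A = p) (m : ℕ) :
    (Measure.pi fun _ : Fin m ↦ ν).map (fun ω ↦ ∑ i, A.indicator (1 : α → ℝ) (ω i)) =
      Bin(ℝ, m, p) := by
  have hmeas : Measurable (A.indicator (1 : α → ℝ)) := measurable_one.indicator hA
  have hsum : Measurable fun ω : Fin m → α ↦ ∑ i, A.indicator (1 : α → ℝ) (ω i) :=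
    Finset.measurable_fun_sum _ fun i _ ↦ hmeas.comp (measurable_pi_apply i)
  refine Measure.ext_of_charFun (funext fun t ↦ ?_)
  have hexp (x : α) : Complex.exp (t * A.indicator (1 : α → ℝ) x * Complex.I) =
      1 + A.indicator (fun _ ↦ Complex.exp (t * Complex.I) - 1) x := by
    by_cases hx : x ∈ A <;> simp [hx]
  calc charFun ((Measure.pi fun _ : Fin m ↦ ν).map (fun ω ↦ ∑ i, A.indicator 1 (ω i))) t
      = ∫ ω, ∏ i, Complex.exp (t * A.indicator (1 : α → ℝ) (ω i) * Complex.I)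
          ∂(Measure.pi fun _ : Fin m ↦ ν) := by
        rw [charFun_apply_real, integral_map hsum.aemeasurable (by fun_prop)]
        simp_rw [← Complex.exp_sum, ← Finset.sum_mul, ← Finset.mul_sum, Complex.ofReal_sum]
    _ = (∫ x, Complex.exp (t * A.indicator (1 : α → ℝ) x * Complex.I) ∂ν) ^ m := by
        rw [integral_fintype_prod_eq_pow
          (fun x ↦ Complex.exp (t * A.indicator (1 : α → ℝ) x * Complex.I)), Fintype.card_fin]
    _ = (1 - p + p * Complex.exp (t * Complex.I)) ^ m := by
        simp_rw [hexp]
        rw [integral_add (integrable_const _) ((integrable_const _).indicator hA),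
          integral_indicator_const _ hA, hp]
        simp only [integral_const, probReal_univ, one_smul, Complex.real_smul]
        ring
    _ = _ := (charFun_map_cast_binomial m p t).symm

-- Coupling: the number of `i` with `U i ≤ p`, for independent uniform `U i`, increases with `p`.
lemma map_cast_binomial_real_le_of_isUpperSet (m : ℕ) {p q : unitInterval} (hpq : p ≤ q)
    {s : Set ℝ} (hs : IsUpperSet s) : Bin(ℝ, m, p).real s ≤ Bin(ℝ, m, q).real s := by
  have hvol (p : unitInterval) : (volume : Measure unitInterval).real (Set.Iic p) = p := by
    rw [measureReal_def, unitInterval.volume_Iic, ENNReal.toReal_ofReal p.2.1]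
  have hmeas (p : unitInterval) : Measurable fun ω : Fin m → unitInterval ↦
      ∑ i, (Set.Iic p).indicator (1 : unitInterval → ℝ) (ω i) := by
    have := measurable_one (α := ℝ).indicator (measurableSet_Iic (a := p))
    fun_prop
  have hs' : MeasurableSet s := hs.ordConnected.measurableSet
  rw [← map_sum_indicator_pi_eq_binomial volume measurableSet_Iic (hvol p) m,
    ← map_sum_indicator_pi_eq_binomial volume measurableSet_Iic (hvol q) m,
    map_measureReal_apply (hmeas p) hs', map_measureReal_apply (hmeas q) hs']
  refine measureReal_mono fun ω hω ↦ hs (Finset.sum_le_sum fun i _ ↦ ?_) hω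
  exact Set.indicator_le_indicator_of_subset (Set.Iic_subset_Iic.2 hpq) (fun _ ↦ zero_le_one) _

lemma map_cast_binomial_real_le_of_isLowerSet (m : ℕ) {p q : unitInterval} (hpq : p ≤ q)
    {s : Set ℝ} (hs : IsLowerSet s) : Bin(ℝ, m, q).real s ≤ Bin(ℝ, m, p).real s := by
  have h := map_cast_binomial_real_le_of_isUpperSet m hpq hs.compl
  have hs' : MeasurableSet s := hs.ordConnected.measurableSet
  rw [probReal_compl_eq_one_sub hs', probReal_compl_eq_one_sub hs'] at h
  linarith

end Binomial

section GaussianTail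

lemma gaussianPDFReal_zero_one (x : ℝ) :
    gaussianPDFReal 0 1 x = (√(2 * Real.pi))⁻¹ * Real.exp (-x ^ 2 / 2) := by
  simp [gaussianPDFReal]

lemma hasDerivAt_gaussianPDFReal_zero_one (x : ℝ) :
    HasDerivAt (gaussianPDFReal 0 1) (-(x * gaussianPDFReal 0 1 x)) x := by
  rw [funext gaussianPDFReal_zero_one]
  convert! (((hasDerivAt_pow 2 x).neg.div_const 2).exp.const_mul (√(2 * Real.pi))⁻¹) using 1
  simp only [Pi.neg_apply, Nat.cast_ofNat, Nat.add_one_sub_one, pow_one]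
  ring

lemma continuous_gaussianPDFReal_zero_one : Continuous (gaussianPDFReal 0 1) :=
  continuous_iff_continuousAt.2 fun x ↦ (hasDerivAt_gaussianPDFReal_zero_one x).continuousAt

lemma gaussianPDFReal_zero_one_le_one (x : ℝ) : gaussianPDFReal 0 1 x ≤ 1 := by
  rw [gaussianPDFReal_zero_one]
  refine mul_le_one₀ (inv_le_one_of_one_le₀ (Real.one_le_sqrt.2 ?_)) (Real.exp_pos _).le
    (Real.exp_le_one_iff.2 (by nlinarith))
  linarith [Real.pi_gt_three]

lemma gaussianPDFReal_zero_one_le_exp (a x : ℝ) :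
    gaussianPDFReal 0 1 x ≤ (√(2 * Real.pi))⁻¹ * Real.exp (a ^ 2 / 2) * Real.exp (-a * x) := by
  rw [gaussianPDFReal_zero_one, mul_assoc, ← Real.exp_add]
  gcongr
  linarith [sq_nonneg (x - a)]

lemma tendsto_gaussianPDFReal_zero_one_atTop :
    Tendsto (gaussianPDFReal 0 1) atTop (𝓝 0) := by
  rw [funext gaussianPDFReal_zero_one, ← mul_zero (√(2 * Real.pi))⁻¹]
  refine (Real.tendsto_exp_atBot.comp ?_).const_mul _
  simp_rw [neg_div]
  exact tendsto_neg_atTop_atBot.comp ((tendsto_pow_atTop two_ne_zero).atTop_div_const two_pos)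

lemma gaussTail_eq_real_Ici (t : ℝ) : gaussTail t = (gaussianReal 0 1).real (Set.Ici t) := rfl

lemma gaussTail_eq_integral_Ioi (t : ℝ) :
    gaussTail t = ∫ x in Set.Ioi t, gaussianPDFReal 0 1 x := by
  rw [gaussTail, gaussianReal_apply_eq_integral 0 one_ne_zero,
    ENNReal.toReal_ofReal (integral_nonneg fun x ↦ gaussianPDFReal_nonneg _ _ _)]
  exact integral_Ici_eq_integral_Ioi

lemma gaussTail_nonneg (t : ℝ) : 0 ≤ gaussTail t := ENNReal.toReal_nonneg

lemma gaussTail_le_one (t : ℝ) : gaussTail t ≤ 1 := measureReal_le_one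

lemma hasDerivAt_gaussTail (t : ℝ) : HasDerivAt gaussTail (-gaussianPDFReal 0 1 t) t := by
  have hint := integrable_gaussianPDFReal 0 1
  have heq (t : ℝ) : gaussTail t = gaussTail 0 - ∫ x in (0 : ℝ)..t, gaussianPDFReal 0 1 x := by
    rw [← intervalIntegral.integral_Ioi_sub_Ioi' hint.integrableOn hint.integrableOn,
      gaussTail_eq_integral_Ioi, gaussTail_eq_integral_Ioi, sub_sub_cancel]
  rw [funext heq]
  exact (intervalIntegral.integral_hasDerivAt_right hint.intervalIntegrable
    (continuous_gaussianPDFReal_zero_one.stronglyMeasurableAtFilter _ _)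
    continuous_gaussianPDFReal_zero_one.continuousAt).const_sub _

lemma continuous_gaussTail : Continuous gaussTail :=
  continuous_iff_continuousAt.2 fun t ↦ (hasDerivAt_gaussTail t).continuousAt

lemma real_Iic_neg_eq_gaussTail (t : ℝ) :
    (gaussianReal 0 1).real (Set.Iic (-t)) = gaussTail t := by
  have hmap : (gaussianReal 0 1).map (fun x ↦ -x) = gaussianReal 0 1 := by
    simpa using gaussianReal_map_neg (μ := 0) (v := 1)
  calc (gaussianReal 0 1).real (Set.Iic (-t))
      = ((gaussianReal 0 1).map (fun x ↦ -x)).real (Set.Iic (-t)) := by rw [hmap]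
    _ = (gaussianReal 0 1).real (Set.Ici t) := by
        rw [map_measureReal_apply (by fun_prop) measurableSet_Iic]
        simp
    _ = gaussTail t := rfl

lemma gaussTail_le_exp {a : ℝ} (ha : 0 < a) (t : ℝ) :
    gaussTail t ≤ (√(2 * Real.pi))⁻¹ * Real.exp (a ^ 2 / 2 - a * t) / a := by
  calc gaussTail t = ∫ x in Set.Ioi t, gaussianPDFReal 0 1 x := gaussTail_eq_integral_Ioi t
    _ ≤ ∫ x in Set.Ioi t, (√(2 * Real.pi))⁻¹ * Real.exp (a ^ 2 / 2) * Real.exp (-a * x) :=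
        setIntegral_mono (integrable_gaussianPDFReal 0 1).integrableOn
          ((integrableOn_exp_mul_Ioi (neg_lt_zero.2 ha) t).const_mul _)
          (gaussianPDFReal_zero_one_le_exp a)
    _ = (√(2 * Real.pi))⁻¹ * Real.exp (a ^ 2 / 2 - a * t) / a := by
        rw [integral_const_mul, integral_exp_mul_Ioi (neg_lt_zero.2 ha), neg_div_neg_eq,
          sub_eq_add_neg, Real.exp_add, neg_mul]
        ring

lemma gaussTail_le_gaussianPDFReal_div {t : ℝ} (ht : 0 < t) :
    gaussTail t ≤ gaussianPDFReal 0 1 t / t := by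
  convert gaussTail_le_exp ht t using 2
  rw [gaussianPDFReal_zero_one]
  ring_nf

lemma tendsto_gaussTail_atTop : Tendsto gaussTail atTop (𝓝 0) := by
  refine squeeze_zero' (Eventually.of_forall gaussTail_nonneg)
    (eventually_atTop.2 ⟨1, fun t ht ↦ ?_⟩) tendsto_gaussianPDFReal_zero_one_atTop
  exact (gaussTail_le_gaussianPDFReal_div (one_pos.trans_le ht)).trans
    (div_le_self (gaussianPDFReal_nonneg _ _ _) ht)

end GaussianTail

section CentralLimit

variable {p : ℕ → unitInterval} {t : ℕ → ℝ} {eta b : ℝ}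

lemma exists_lt_gaussTail_lt (hb : gaussTail eta < b) : ∃ c < eta, gaussTail c < b := by
  have hlt : ∀ᶠ c in 𝓝[<] eta, gaussTail c < b :=
    nhdsWithin_le_nhds (continuous_gaussTail.continuousAt.eventually_lt_const hb)
  have hlt' : ∀ᶠ c in 𝓝[<] eta, c < eta := self_mem_nhdsWithin
  exact (hlt'.and hlt).exists

lemma eventually_real_stdBinomial_Ici_lt
    (hp : Tendsto (fun m : ℕ ↦ m * (p m * (1 - p m) : ℝ)) atTop atTop)
    (ht : ∀ c < eta, ∀ᶠ m in atTop, c ≤ t m) (hb : gaussTail eta < b) :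
    ∀ᶠ m in atTop, (stdBinomial m (p m)).real (Set.Ici (t m)) < b := by
  obtain ⟨c, hc, hcb⟩ := exists_lt_gaussTail_lt hb
  have hlim := tendsto_real_stdBinomial hp (s := Set.Ici c) (by simp)
  filter_upwards [ht c hc, hlim.eventually_lt_const hcb] with m hcm hm
  exact (measureReal_mono (Set.Ici_subset_Ici.2 hcm)).trans_lt hm

lemma eventually_real_stdBinomial_Iio_lt
    (hp : Tendsto (fun m : ℕ ↦ m * (p m * (1 - p m) : ℝ)) atTop atTop)
    (ht : ∀ c < eta, ∀ᶠ m in atTop, t m ≤ -c) (hb : gaussTail eta < b) :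
    ∀ᶠ m in atTop, (stdBinomial m (p m)).real (Set.Iio (t m)) < b := by
  obtain ⟨c, hc, hcb⟩ := exists_lt_gaussTail_lt hb
  have hlim := tendsto_real_stdBinomial hp (s := Set.Iic (-c)) (by simp)
  rw [real_Iic_neg_eq_gaussTail] at hlim
  filter_upwards [ht c hc, hlim.eventually_lt_const hcb] with m hcm hm
  exact (measureReal_mono (Set.Iio_subset_Iic_self.trans (Set.Iic_subset_Iic.2 hcm))).trans_lt hm

end CentralLimit

section GaussianPair

instance (lam : ℝ) : IsProbabilityMeasure (gaussPair lam) :=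
  Measure.isProbabilityMeasure_map (by fun_prop)

lemma measurableSet_quadrant (h : ℝ) : MeasurableSet {p : ℝ × ℝ | h ≤ p.1 ∧ h ≤ p.2} :=
  (measurableSet_le measurable_const measurable_fst).inter
    (measurableSet_le measurable_const measurable_snd)

lemma apply_prod_eq (L : StrongDual ℝ (ℝ × ℝ)) (z : ℝ × ℝ) :
    L z = z.1 * L (1, 0) + z.2 * L (0, 1) := by
  rw [← smul_eq_mul, ← smul_eq_mul, ← map_smul, ← map_smul, ← map_add]
  simp

lemma charFunDual_gaussianReal_zero_one (L : StrongDual ℝ ℝ) :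
    charFunDual (gaussianReal 0 1) L = Complex.exp ((-L 1 ^ 2 / 2 : ℝ)) := by
  rw [charFunDual_eq_charFun_map_one, gaussianReal_map_continuousLinearMap, charFun_gaussianReal]
  simp [max_eq_left (sq_nonneg (L 1)), neg_div]

lemma charFunDual_gaussPair {lam : ℝ} (hlam : lam ^ 2 ≤ 1) (L : StrongDual ℝ (ℝ × ℝ)) :
    charFunDual (gaussPair lam) L =
      Complex.exp ((-(L (1, 0) ^ 2 + 2 * lam * (L (1, 0) * L (0, 1)) + L (0, 1) ^ 2) / 2 : ℝ)) := by
  let U : ℝ × ℝ →L[ℝ] ℝ × ℝ :=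
    (ContinuousLinearMap.fst ℝ ℝ ℝ).prod (lam • ContinuousLinearMap.fst ℝ ℝ ℝ +
      √(1 - lam ^ 2) • ContinuousLinearMap.snd ℝ ℝ ℝ)
  have hU : gaussPair lam = ((gaussianReal 0 1).prod (gaussianReal 0 1)).map U := rfl
  have hsq : √(1 - lam ^ 2) ^ 2 = 1 - lam ^ 2 := Real.sq_sqrt (sub_nonneg.2 hlam)
  rw [hU, charFunDual_map, charFunDual_prod, charFunDual_gaussianReal_zero_one,
    charFunDual_gaussianReal_zero_one, ← Complex.exp_add, ← Complex.ofReal_add]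
  congr 2
  simp only [ContinuousLinearMap.comp_apply, ContinuousLinearMap.inl_apply,
    ContinuousLinearMap.inr_apply, apply_prod_eq L (U _)]
  simp only [U, ContinuousLinearMap.prod_apply, ContinuousLinearMap.coe_fst', add_apply,
    smul_apply, smul_eq_mul, ContinuousLinearMap.coe_snd']
  linear_combination (- L (0, 1) ^ 2 / 2) * hsq

lemma charFunDual_map_dotp_prodMk {d : ℕ} (x y : Fin d → ℝ) (L : StrongDual ℝ (ℝ × ℝ)) :
    charFunDual ((Measure.pi fun _ : Fin d ↦ gaussianReal 0 1).map
        fun a ↦ (dotp a x, dotp a y)) L =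
      Complex.exp ((-(dotp x x * L (1, 0) ^ 2 + 2 * dotp x y * (L (1, 0) * L (0, 1)) +
        dotp y y * L (0, 1) ^ 2) / 2 : ℝ)) := by
  let T : (Fin d → ℝ) →L[ℝ] ℝ × ℝ :=
    (∑ j, x j • ContinuousLinearMap.proj j).prod (∑ j, y j • ContinuousLinearMap.proj j)
  have hT : (fun a ↦ (dotp a x, dotp a y)) = T := by
    funext a
    simp [T, dotp, mul_comm]
  have hTs (j : Fin d) : T (Pi.single j 1) = (x j, y j) := by
    simp [← hT, dotp, Pi.single_apply]
  rw [hT, charFunDual_map, charFunDual_pi]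
  simp only [charFunDual_gaussianReal_zero_one, ← Complex.exp_sum, ← Complex.ofReal_sum]
  congr 2
  simp only [ContinuousLinearMap.comp_apply, ContinuousLinearMap.single_apply, hTs,
    apply_prod_eq L (x _, y _), dotp, Finset.mul_sum, Finset.sum_mul, ← Finset.sum_add_distrib,
    ← Finset.sum_neg_distrib, Finset.sum_div]
  refine Finset.sum_congr rfl fun j _ ↦ ?_
  ring

variable {d : ℕ} {x y : Fin d → ℝ}

lemma unitVec.dotp_self (hx : unitVec x) : dotp x x = 1 := by
  rw [← show ∑ j, x j ^ 2 = 1 from hx, dotp]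
  exact Finset.sum_congr rfl fun j _ ↦ (sq (x j)).symm

lemma dotp_sq_le_one (hx : unitVec x) (hy : unitVec y) : dotp x y ^ 2 ≤ 1 := by
  have h := Finset.sum_mul_sq_le_sq_mul_sq Finset.univ x y
  rwa [show ∑ j, x j ^ 2 = 1 from hx, show ∑ j, y j ^ 2 = 1 from hy, one_mul] at h

lemma map_dotp_prodMk_eq_gaussPair (hx : unitVec x) (hy : unitVec y) :
    (Measure.pi fun _ : Fin d ↦ gaussianReal 0 1).map (fun a ↦ (dotp a x, dotp a y)) =
      gaussPair (dotp x y) := by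
  refine Measure.ext_of_charFunDual (funext fun L ↦ ?_)
  rw [charFunDual_map_dotp_prodMk, charFunDual_gaussPair (dotp_sq_le_one hx hy), hx.dotp_self,
    hy.dotp_self, one_mul, one_mul]

lemma measurable_dotp (x : Fin d → ℝ) : Measurable fun a ↦ dotp a x := by
  unfold dotp
  fun_prop

lemma real_dotp_ge_eq_mu (hx : unitVec x) (hy : unitVec y) (h : ℝ) :
    (Measure.pi fun _ : Fin d ↦ gaussianReal 0 1).real {a | h ≤ dotp a x ∧ h ≤ dotp a y} =
      mu (dotp x y) h := by
  rw [mu, ← map_dotp_prodMk_eq_gaussPair hx hy, Measure.map_apply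
    ((measurable_dotp x).prodMk (measurable_dotp y)) (measurableSet_quadrant h)]
  rfl

end GaussianPair

section Plackett

lemma mu_eq_real_prod (lam h : ℝ) : mu lam h = ((gaussianReal 0 1).prod (gaussianReal 0 1)).real
    {z : ℝ × ℝ | h ≤ z.1 ∧ h ≤ lam * z.1 + √(1 - lam ^ 2) * z.2} := by
  rw [mu, gaussPair, Measure.map_apply (by fun_prop) (measurableSet_quadrant h)]
  rfl

lemma mu_nonneg (lam h : ℝ) : 0 ≤ mu lam h := ENNReal.toReal_nonneg

lemma mu_le_one (lam h : ℝ) : mu lam h ≤ 1 := measureReal_le_one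

lemma mu_neg_one {h : ℝ} (hh : 0 < h) : mu (-1) h = 0 := by
  have hempty : {z : ℝ × ℝ | h ≤ z.1 ∧ h ≤ -1 * z.1 + √(1 - (-1) ^ 2) * z.2} = ∅ := by
    ext z
    suffices h ≤ z.1 → -z.1 < h by simpa
    intro hz
    linarith
  rw [mu_eq_real_prod, hempty, measureReal_empty]

lemma mu_le_gaussTail (lam h : ℝ) : mu lam h ≤ gaussTail h := by
  calc mu lam h ≤ ((gaussianReal 0 1).prod (gaussianReal 0 1)).real (Set.Ici h ×ˢ Set.univ) := by
        rw [mu_eq_real_prod]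
        exact measureReal_mono fun z hz ↦ ⟨hz.1, Set.mem_univ _⟩
    _ = gaussTail h := by rw [measureReal_prod_prod, probReal_univ, mul_one, gaussTail_eq_real_Ici]

lemma mu_one (h : ℝ) : mu 1 h = gaussTail h := by
  refine (mu_le_gaussTail 1 h).antisymm ?_
  rw [gaussTail_eq_real_Ici, mu_eq_real_prod,
    ← mul_one ((gaussianReal 0 1).real (Set.Ici h)), ← probReal_univ (μ := gaussianReal 0 1),
    ← measureReal_prod_prod]
  refine measureReal_mono fun z hz ↦ ⟨hz.1, ?_⟩
  simpa using hz.1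

lemma setIntegral_gaussianReal_zero_one {s : Set ℝ} (hs : MeasurableSet s) (f : ℝ → ℝ) :
    ∫ x in s, f x ∂(gaussianReal 0 1) = ∫ x in s, gaussianPDFReal 0 1 x * f x := by
  rw [gaussianReal_of_var_ne_zero _ one_ne_zero,
    setIntegral_withDensity_eq_setIntegral_toReal_smul (measurable_gaussianPDF 0 1)
      (ae_of_all _ fun _ ↦ ENNReal.ofReal_lt_top) f hs]
  simp only [toReal_gaussianPDF, smul_eq_mul]

/-- The joint density of `gaussPair lam` at the diagonal point `(h, h)`. By Plackett's identity it
is the derivative of `mu · h` at `lam`. -/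
def gaussPairDensity (lam h : ℝ) : ℝ :=
  Real.exp (-h ^ 2 / (1 + lam)) / (2 * Real.pi * √(1 - lam ^ 2))

variable {lam h : ℝ}

lemma one_sub_sq_pos (hlam : lam ∈ Set.Ioo (-1) 1) : 0 < 1 - lam ^ 2 := by
  nlinarith [hlam.1, hlam.2]

lemma gaussPairDensity_pos (hlam : lam ∈ Set.Ioo (-1) 1) : 0 < gaussPairDensity lam h := by
  have := Real.sqrt_pos.2 (one_sub_sq_pos hlam)
  unfold gaussPairDensity
  positivity

lemma mu_eq_setIntegral (hlam : lam ∈ Set.Ioo (-1) 1) :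
    mu lam h =
      ∫ z in Set.Ioi h, gaussTail ((h - lam * z) / √(1 - lam ^ 2)) ∂(gaussianReal 0 1) := by
  have hs := Real.sqrt_pos.2 (one_sub_sq_pos hlam)
  have hatom : gaussianReal 0 1 {h} = 0 :=
    have := nullSingletonClass_gaussianReal (μ := 0) one_ne_zero
    measure_singleton h
  have hmeas : MeasurableSet {z : ℝ × ℝ | h ≤ z.1 ∧ h ≤ lam * z.1 + √(1 - lam ^ 2) * z.2} := by
    measurability
  rw [mu_eq_real_prod, measureReal_def, Measure.prod_apply hmeas,
    ← integral_toReal (measurable_measure_prodMk_left hmeas).aemeasurable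
      (ae_of_all _ fun _ ↦ measure_lt_top _ _),
    ← integral_Ici_eq_integral_Ioi' hatom, ← integral_indicator measurableSet_Ici]
  congr 1 with z
  by_cases hz : h ≤ z
  · rw [Set.indicator_of_mem (Set.mem_Ici.2 hz), gaussTail]
    congr 2 with w
    simp only [Set.mem_preimage, Set.mem_ofPred_eq, hz, true_and, div_le_iff₀ hs,
      sub_le_iff_le_add', mul_comm w]
  · simp [hz]

lemma hasDerivAt_sub_mul_div_sqrt (hlam : lam ∈ Set.Ioo (-1) 1) (z : ℝ) :
    HasDerivAt (fun t ↦ (h - t * z) / √(1 - t ^ 2)) ((lam * h - z) / √(1 - lam ^ 2) ^ 3) lam := by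
  have hpos := one_sub_sq_pos hlam
  have hs := Real.sqrt_pos.2 hpos
  have hnum : HasDerivAt (fun t ↦ h - t * z) (-z) lam := by
    simpa using ((hasDerivAt_id lam).mul_const z).const_sub h
  have hden : HasDerivAt (fun t : ℝ ↦ 1 - t ^ 2) (-(2 * lam)) lam := by
    simpa using (hasDerivAt_pow 2 lam).const_sub 1
  refine (hnum.fun_div (hden.sqrt hpos.ne') hs.ne').congr_deriv ?_
  have hsq : √(1 - lam ^ 2) ^ 2 = 1 - lam ^ 2 := Real.sq_sqrt hpos.le
  field_simp
  rw [hsq]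
  ring

lemma gaussianPDFReal_zero_one_mul (x y : ℝ) :
    gaussianPDFReal 0 1 x * gaussianPDFReal 0 1 y =
      (2 * Real.pi)⁻¹ * Real.exp (-(x ^ 2 + y ^ 2) / 2) := by
  rw [gaussianPDFReal_zero_one, gaussianPDFReal_zero_one, mul_mul_mul_comm, ← mul_inv,
    Real.mul_self_sqrt (by positivity), ← Real.exp_add, neg_add, add_div]

lemma gaussianPDFReal_mul_gaussianPDFReal_swap (hlam : lam ∈ Set.Ioo (-1) 1) (z : ℝ) :
    gaussianPDFReal 0 1 z * gaussianPDFReal 0 1 ((h - lam * z) / √(1 - lam ^ 2)) =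
      gaussianPDFReal 0 1 h * gaussianPDFReal 0 1 ((z - lam * h) / √(1 - lam ^ 2)) := by
  have hpos := one_sub_sq_pos hlam
  simp only [gaussianPDFReal_zero_one_mul, div_pow, Real.sq_sqrt hpos.le]
  congr 3
  field_simp
  ring

lemma gaussianPDFReal_mul_gaussianPDFReal_diag (hlam : lam ∈ Set.Ioo (-1) 1) :
    gaussianPDFReal 0 1 h * gaussianPDFReal 0 1 ((h - lam * h) / √(1 - lam ^ 2)) /
      √(1 - lam ^ 2) = gaussPairDensity lam h := by
  have hpos := one_sub_sq_pos hlam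
  have hexp : -(h ^ 2 + (h - lam * h) ^ 2 / (1 - lam ^ 2)) / 2 = -h ^ 2 / (1 + lam) := by
    have : 1 + lam ≠ 0 := by linarith [hlam.1]
    field_simp
    ring
  rw [gaussianPDFReal_zero_one_mul, div_pow, Real.sq_sqrt hpos.le, hexp, gaussPairDensity]
  ring

lemma setIntegral_plackett (hlam : lam ∈ Set.Ioo (-1) 1) (hh : 0 ≤ h) :
    ∫ z in Set.Ioi h, -gaussianPDFReal 0 1 ((h - lam * z) / √(1 - lam ^ 2)) *
      ((lam * h - z) / √(1 - lam ^ 2) ^ 3) ∂(gaussianReal 0 1) = gaussPairDensity lam h := by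
  set s := √(1 - lam ^ 2) with hs_def
  have hs : 0 < s := Real.sqrt_pos.2 (one_sub_sq_pos hlam)
  set F : ℝ → ℝ := fun z ↦ -(gaussianPDFReal 0 1 h * gaussianPDFReal 0 1 ((z - lam * h) / s) / s)
  have hintegrand (z : ℝ) : gaussianPDFReal 0 1 z *
      (-gaussianPDFReal 0 1 ((h - lam * z) / s) * ((lam * h - z) / s ^ 3)) =
      gaussianPDFReal 0 1 h * gaussianPDFReal 0 1 ((z - lam * h) / s) *
        ((z - lam * h) / s ^ 3) := by
    rw [hs_def, ← gaussianPDFReal_mul_gaussianPDFReal_swap hlam z]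
    ring
  have hderiv (z : ℝ) (_ : z ∈ Set.Ici h) : HasDerivAt F (gaussianPDFReal 0 1 h *
      gaussianPDFReal 0 1 ((z - lam * h) / s) * ((z - lam * h) / s ^ 3)) z := by
    refine ((((hasDerivAt_gaussianPDFReal_zero_one _).comp z
      (((hasDerivAt_id z).sub_const (lam * h)).div_const s)).const_mul _).div_const
        s).neg.congr_deriv ?_
    simp only [id_eq]
    field_simp
  have hnonneg (z : ℝ) (hz : z ∈ Set.Ioi h) : 0 ≤ gaussianPDFReal 0 1 h *
      gaussianPDFReal 0 1 ((z - lam * h) / s) * ((z - lam * h) / s ^ 3) := by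
    have : 0 ≤ z - lam * h := by nlinarith [hlam.2, Set.mem_Ioi.1 hz]
    have := gaussianPDFReal_nonneg 0 1 h
    have := gaussianPDFReal_nonneg 0 1 ((z - lam * h) / s)
    positivity
  have hlim : Tendsto F atTop (𝓝 0) := by
    have := tendsto_gaussianPDFReal_zero_one_atTop.comp
      ((tendsto_atTop_add_const_right atTop (-(lam * h)) tendsto_id).atTop_div_const hs)
    simpa [F, sub_eq_add_neg] using ((this.const_mul (gaussianPDFReal 0 1 h)).div_const s).neg
  rw [setIntegral_gaussianReal_zero_one measurableSet_Ioi]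
  simp_rw [hintegrand]
  rw [integral_Ioi_of_hasDerivAt_of_nonneg' hderiv hnonneg hlim, zero_sub, neg_neg,
    gaussianPDFReal_mul_gaussianPDFReal_diag hlam]

lemma mem_Ioo_of_mem_ball {t : ℝ} (ht : t ∈ Metric.ball lam ((1 - |lam|) / 2)) :
    t ∈ Set.Ioo (-1) 1 ∧ (1 - |lam|) / 2 ≤ 1 - t ^ 2 := by
  rw [Metric.mem_ball, Real.dist_eq] at ht
  have habs : |t| ≤ 1 - (1 - |lam|) / 2 := by linarith [abs_sub_abs_le_abs_sub t lam]
  have hlam := abs_nonneg lam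
  have hpos : 0 < (1 - |lam|) / 2 := (abs_nonneg _).trans_lt ht
  refine ⟨abs_lt.1 (by linarith), ?_⟩
  rw [← sq_abs]
  nlinarith [abs_nonneg t]

lemma abs_plackett_integrand_le {t δ : ℝ} (ht : t ∈ Set.Ioo (-1) 1) (hδ : 0 < δ)
    (hδt : δ ≤ 1 - t ^ 2) (z : ℝ) :
    |-gaussianPDFReal 0 1 ((h - t * z) / √(1 - t ^ 2)) * ((t * h - z) / √(1 - t ^ 2) ^ 3)| ≤
      (|h| + |z|) / √δ ^ 3 := by
  have : 0 < √δ := Real.sqrt_pos.2 hδ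
  have hnum : |t * h - z| ≤ |h| + |z| := by
    refine (abs_sub _ _).trans ?_
    rw [abs_mul]
    gcongr
    exact mul_le_of_le_one_left (abs_nonneg h) (abs_lt.2 ht).le
  rw [abs_mul, abs_neg, abs_of_nonneg (gaussianPDFReal_nonneg _ _ _), abs_div, abs_pow,
    abs_of_nonneg (Real.sqrt_nonneg _), ← one_mul ((|h| + |z|) / √δ ^ 3)]
  gcongr
  exact gaussianPDFReal_zero_one_le_one _

lemma hasDerivAt_mu (hlam : lam ∈ Set.Ioo (-1) 1) (hh : 0 ≤ h) :
    HasDerivAt (mu · h) (gaussPairDensity lam h) lam := by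
  set δ := (1 - |lam|) / 2
  have hδ : 0 < δ := half_pos (sub_pos.2 (abs_lt.2 hlam))
  have hmu : (mu · h) =ᶠ[𝓝 lam] fun t ↦
      ∫ z in Set.Ioi h, gaussTail ((h - t * z) / √(1 - t ^ 2)) ∂(gaussianReal 0 1) := by
    filter_upwards [Metric.ball_mem_nhds lam hδ] with t ht
    exact mu_eq_setIntegral (mem_Ioo_of_mem_ball ht).1
  have hmeas (t : ℝ) : AEStronglyMeasurable (fun z ↦ gaussTail ((h - t * z) / √(1 - t ^ 2)))
      ((gaussianReal 0 1).restrict (Set.Ioi h)) :=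
    (continuous_gaussTail.comp (by fun_prop)).aestronglyMeasurable
  have hint : Integrable (fun z : ℝ ↦ z) (gaussianReal 0 1) :=
    (memLp_id_gaussianReal 1).integrable (by norm_num)
  rw [← setIntegral_plackett hlam hh]
  refine HasDerivAt.congr_of_eventuallyEq ?_ hmu
  refine (hasDerivAt_integral_of_dominated_loc_of_deriv_le (Metric.ball_mem_nhds lam hδ)
    (Eventually.of_forall hmeas) ?_ ?_
    (F' := fun t z ↦ -gaussianPDFReal 0 1 ((h - t * z) / √(1 - t ^ 2)) *
      ((t * h - z) / √(1 - t ^ 2) ^ 3))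
    (bound := fun z ↦ (|h| + |z|) / √δ ^ 3)
    (ae_of_all _ fun z t ht ↦ ?_) ?_ (ae_of_all _ fun z t ht ↦ ?_)).2
  · refine Integrable.of_bound (hmeas lam) 1 (ae_of_all _ fun z ↦ ?_)
    rw [Real.norm_of_nonneg (gaussTail_nonneg _)]
    exact gaussTail_le_one _
  · exact ((continuous_gaussianPDFReal_zero_one.comp (by fun_prop)).neg.mul
      (by fun_prop)).aestronglyMeasurable
  · obtain ⟨ht', hδt⟩ := mem_Ioo_of_mem_ball ht
    exact abs_plackett_integrand_le ht' hδ hδt z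
  · exact (((integrable_const |h|).add hint.abs).div_const _).restrict
  · exact (hasDerivAt_gaussTail _).comp t (hasDerivAt_sub_mul_div_sqrt (mem_Ioo_of_mem_ball ht).1 z)

lemma exists_mu_sub_eq_gaussPairDensity_mul {a b : ℝ} (ha : -1 < a) (hab : a < b) (hb : b < 1)
    (hh : 0 ≤ h) :
    ∃ c ∈ Set.Ioo a b, mu b h - mu a h = gaussPairDensity c h * (b - a) := by
  have hderiv (t : ℝ) (ht : t ∈ Set.Icc a b) : HasDerivAt (mu · h) (gaussPairDensity t h) t :=
    hasDerivAt_mu ⟨ha.trans_le ht.1, ht.2.trans_lt hb⟩ hh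
  obtain ⟨c, hc, hslope⟩ := exists_hasDerivAt_eq_slope (mu · h) (gaussPairDensity · h) hab
    (fun t ht ↦ (hderiv t ht).continuousAt.continuousWithinAt)
    (fun t ht ↦ hderiv t (Set.Ioo_subset_Icc_self ht))
  exact ⟨c, hc, ((eq_div_iff (sub_pos.2 hab).ne').1 hslope).symm⟩

lemma monotoneOn_mu (hh : 0 < h) : MonotoneOn (mu · h) (Set.Icc (-1) 1) := by
  intro a ha b hb hab
  rcases ha.1.eq_or_lt with rfl | ha
  · exact (mu_neg_one hh).trans_le (mu_nonneg _ _)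
  rcases hb.2.eq_or_lt with rfl | hb
  · exact (mu_le_gaussTail _ _).trans_eq (mu_one h).symm
  rcases hab.eq_or_lt with rfl | hab
  · exact le_rfl
  obtain ⟨c, hc, hsub⟩ := exists_mu_sub_eq_gaussPairDensity_mul ha hab hb hh.le
  have := gaussPairDensity_pos (h := h) ⟨ha.trans hc.1, hc.2.trans hb⟩
  exact sub_nonneg.1 (hsub ▸ mul_nonneg this.le (sub_pos.2 hab).le)

-- Exponential tilts by `h` and by `h √(1 - lam²) / (1 + lam)`: the exponents are then linear in `z`
-- and integrate over `z > h` to exactly the exponent of `gaussPairDensity`.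
lemma gaussianPDFReal_mul_gaussTail_le (hlam : lam ∈ Set.Ioo (-1) 1) (hh : 0 < h) (z : ℝ) :
    gaussianPDFReal 0 1 z * gaussTail ((h - lam * z) / √(1 - lam ^ 2)) ≤
      (1 + lam) / (2 * Real.pi * √(1 - lam ^ 2) * h) * Real.exp (-(h / (1 + lam)) * z) := by
  have hs := Real.sqrt_pos.2 (one_sub_sq_pos hlam)
  have h1 : 0 < 1 + lam := by linarith [hlam.1]
  have hsq := Real.sq_sqrt (one_sub_sq_pos hlam).le
  set s := √(1 - lam ^ 2)
  set a := h * s / (1 + lam) with ha_def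
  have ha : 0 < a := by positivity
  have h2pi : √(2 * Real.pi) ^ 2 = 2 * Real.pi := Real.sq_sqrt (by positivity)
  calc gaussianPDFReal 0 1 z * gaussTail ((h - lam * z) / s)
      ≤ ((√(2 * Real.pi))⁻¹ * Real.exp (h ^ 2 / 2) * Real.exp (-h * z)) *
          ((√(2 * Real.pi))⁻¹ * Real.exp (a ^ 2 / 2 - a * ((h - lam * z) / s)) / a) :=
        mul_le_mul (gaussianPDFReal_zero_one_le_exp h z) (gaussTail_le_exp ha _)
          (gaussTail_nonneg _) (by positivity)
    _ = (√(2 * Real.pi) ^ 2 * a)⁻¹ *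
          Real.exp (h ^ 2 / 2 + -h * z + (a ^ 2 / 2 - a * ((h - lam * z) / s))) := by
        rw [Real.exp_add, Real.exp_add]
        field_simp
    _ = _ := by
        congr 2
        · rw [h2pi, ha_def]
          field_simp
        · rw [ha_def, div_pow, mul_pow, hsq]
          field_simp
          ring

lemma mu_le_gaussPairDensity (hlam : lam ∈ Set.Ioo (-1) 1) (hh : 0 < h) :
    mu lam h ≤ ((1 + lam) / h) ^ 2 * gaussPairDensity lam h := by
  have h1 : 0 < 1 + lam := by linarith [hlam.1]
  have hk : -(h / (1 + lam)) < 0 := neg_lt_zero.2 (div_pos hh h1)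
  have hintl : IntegrableOn
      (fun z ↦ gaussianPDFReal 0 1 z * gaussTail ((h - lam * z) / √(1 - lam ^ 2))) (Set.Ioi h) := by
    refine (integrable_gaussianPDFReal 0 1).integrableOn.mul_bdd (c := 1)
      (continuous_gaussTail.comp (by fun_prop)).aestronglyMeasurable (ae_of_all _ fun z ↦ ?_)
    rw [Real.norm_of_nonneg (gaussTail_nonneg _)]
    exact gaussTail_le_one _
  calc mu lam h
      = ∫ z in Set.Ioi h,
          gaussianPDFReal 0 1 z * gaussTail ((h - lam * z) / √(1 - lam ^ 2)) := by
        rw [mu_eq_setIntegral hlam, setIntegral_gaussianReal_zero_one measurableSet_Ioi]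
    _ ≤ ∫ z in Set.Ioi h, (1 + lam) / (2 * Real.pi * √(1 - lam ^ 2) * h) *
          Real.exp (-(h / (1 + lam)) * z) :=
        setIntegral_mono hintl ((integrableOn_exp_mul_Ioi hk h).const_mul _)
          (gaussianPDFReal_mul_gaussTail_le hlam hh)
    _ = ((1 + lam) / h) ^ 2 * gaussPairDensity lam h := by
        rw [integral_const_mul, integral_exp_mul_Ioi hk, gaussPairDensity,
          show -(h / (1 + lam)) * h = -h ^ 2 / (1 + lam) by ring]
        field_simp

end Plackett

section Threshold

variable {r lam eta : ℝ} {m : ℕ}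

lemma hthr_pos (hr : 0 < r) (hm : 1 < m) : 0 < hthr r m := by
  have := Real.log_pos (Nat.one_lt_cast.2 hm)
  exact Real.sqrt_pos.2 (by positivity)

lemma tendsto_hthr_atTop (hr : 0 < r) : Tendsto (hthr r) atTop atTop :=
  Real.tendsto_sqrt_atTop.comp
    ((Real.tendsto_log_atTop.comp tendsto_natCast_atTop_atTop).const_mul_atTop (by positivity))

lemma natCast_mul_exp_neg_hthr_sq_div (hr : 0 ≤ r) (hlam : -1 < lam) (hm : 0 < m) :
    m * Real.exp (-hthr r m ^ 2 / (1 + lam)) = (m : ℝ) ^ ((lam - (2 * r - 1)) / (1 + lam)) := by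
  have hm' : (0 : ℝ) < m := Nat.cast_pos.2 hm
  have h1 : 1 + lam ≠ 0 := by linarith
  have := Real.log_natCast_nonneg m
  rw [hthr, Real.sq_sqrt (by positivity), Real.rpow_def_of_pos hm']
  nth_rw 1 [← Real.exp_log hm']
  rw [← Real.exp_add]
  congr 1
  field_simp
  ring

lemma sqrt_natCast_mul_gaussPairDensity (hr : 0 ≤ r) (hlam : lam ∈ Set.Ioo (-1) 1) (hm : 0 < m) :
    √(m * gaussPairDensity lam (hthr r m)) =
      (m : ℝ) ^ ((lam - (2 * r - 1)) / (2 * (1 + lam))) /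
        (√(2 * Real.pi) * (1 - lam ^ 2) ^ ((1 : ℝ) / 4)) := by
  have hm' : (0 : ℝ) < m := Nat.cast_pos.2 hm
  have hquarter : √√(1 - lam ^ 2) = (1 - lam ^ 2) ^ ((1 : ℝ) / 4) := by
    rw [Real.sqrt_eq_rpow, Real.sqrt_eq_rpow, ← Real.rpow_mul (one_sub_sq_pos hlam).le]
    norm_num
  rw [gaussPairDensity, mul_div_assoc', natCast_mul_exp_neg_hthr_sq_div hr hlam.1 hm,
    Real.sqrt_div (by positivity), Real.sqrt_mul (by positivity) √(1 - lam ^ 2), hquarter,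
    Real.sqrt_eq_rpow (_ ^ _), ← Real.rpow_mul hm'.le, div_mul_div_comm, mul_one,
    mul_comm (1 + lam)]

lemma epsm_eq (hr : 0 ≤ r) (hlam : lam ∈ Set.Ioo (-1) 1) (hm : 0 < m) :
    epsm r lam eta m =
      eta * (1 + lam) / (hthr r m * √(m * gaussPairDensity lam (hthr r m))) := by
  rw [sqrt_natCast_mul_gaussPairDensity hr hlam hm, epsm, neg_div, Real.rpow_neg (by positivity),
    hthr]
  field_simp

lemma epsm_pos (hr : 0 < r) (hlam : lam ∈ Set.Ioo (-1) 1) (heta : 0 < eta) (hm : 1 < m) :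
    0 < epsm r lam eta m := by
  have hm' : 0 < m := one_pos.trans hm
  have := hthr_pos hr hm
  have := gaussPairDensity_pos (h := hthr r m) hlam
  have : 0 < 1 + lam := by linarith [hlam.1]
  rw [epsm_eq hr.le hlam hm']
  positivity

lemma tendsto_hthr_mul_rpow_neg (hr : 0 ≤ r) {s : ℝ} (hs : 0 < s) :
    Tendsto (fun m : ℕ ↦ hthr r m * (m : ℝ) ^ (-s)) atTop (𝓝 0) := by
  have hlog := ((isLittleO_log_rpow_rpow_atTop (1 / 2) hs).tendsto_div_nhds_zero.comp
    tendsto_natCast_atTop_atTop).const_mul √(2 * r)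
  rw [mul_zero] at hlog
  refine hlog.congr fun m ↦ ?_
  rw [hthr, Real.sqrt_mul (by positivity : 0 ≤ 2 * r) (Real.log m), Function.comp_apply,
    Real.sqrt_eq_rpow (Real.log m), Real.rpow_neg (Nat.cast_nonneg m), mul_assoc, div_eq_mul_inv]

lemma tendsto_epsm_mul_hthr_sq (hr : 0 < r) (hlam : lam ∈ Set.Ioo (2 * r - 1) 1) :
    Tendsto (fun m ↦ epsm r lam eta m * hthr r m ^ 2) atTop (𝓝 0) := by
  have hs : 0 < (lam - (2 * r - 1)) / (2 * (1 + lam)) :=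
    div_pos (sub_pos.2 hlam.1) (by linarith [hlam.1])
  have hlim := (tendsto_hthr_mul_rpow_neg hr.le hs).const_mul
    (√(2 * Real.pi) * (1 + lam) * (1 - lam ^ 2) ^ ((1 : ℝ) / 4) * eta)
  rw [mul_zero] at hlim
  refine hlim.congr' ?_
  filter_upwards [eventually_gt_atTop 1] with m hm
  have := (hthr_pos hr hm).ne'
  rw [epsm, ← hthr, neg_div]
  field_simp

lemma tendsto_epsm (hr : 0 < r) (hlam : lam ∈ Set.Ioo (2 * r - 1) 1) :
    Tendsto (epsm r lam eta) atTop (𝓝 0) := by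
  have hinv := (tendsto_pow_atTop two_ne_zero).comp (tendsto_hthr_atTop hr) |>.inv_tendsto_atTop
  have hlim := (tendsto_epsm_mul_hthr_sq (eta := eta) hr hlam).mul hinv
  rw [mul_zero] at hlim
  refine hlim.congr' ?_
  filter_upwards [eventually_gt_atTop 1] with m hm
  have := (hthr_pos hr hm).ne'
  simp only [Function.comp_apply, Pi.inv_apply]
  field_simp

end Threshold

section StandardizedGap

lemma tendsto_gaussPairDensity_div {ι : Type*} {l : Filter ι} {lam : ℝ}
    (hlam : lam ∈ Set.Ioo (-1) 1) {c h : ι → ℝ} (hc : Tendsto c l (𝓝 lam))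
    (hch : Tendsto (fun i ↦ (c i - lam) * h i ^ 2) l (𝓝 0)) :
    Tendsto (fun i ↦ gaussPairDensity (c i) (h i) / gaussPairDensity lam (h i)) l (𝓝 1) := by
  have h1 : 0 < 1 + lam := by linarith [hlam.1]
  have hs := Real.sqrt_pos.2 (one_sub_sq_pos hlam)
  have hexp : Tendsto (fun i ↦ Real.exp ((c i - lam) * h i ^ 2 / ((1 + c i) * (1 + lam)))) l
      (𝓝 1) := by
    have := (hch.div ((hc.const_add 1).mul_const (1 + lam)) (mul_pos h1 h1).ne').rexp
    rwa [zero_div, Real.exp_zero] at this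
  have hsqrt : Tendsto (fun i ↦ √(1 - lam ^ 2) / √(1 - c i ^ 2)) l (𝓝 1) := by
    have := (tendsto_const_nhds (x := √(1 - lam ^ 2))).div ((hc.pow 2).const_sub 1).sqrt hs.ne'
    rwa [div_self hs.ne'] at this
  have hlim := hexp.mul hsqrt
  rw [mul_one] at hlim
  refine hlim.congr' ?_
  filter_upwards [hc.eventually_const_lt hlam.1] with i hi
  have h1' : 0 < 1 + c i := by linarith
  rw [gaussPairDensity, gaussPairDensity, show (c i - lam) * h i ^ 2 / ((1 + c i) * (1 + lam)) =
      -h i ^ 2 / (1 + c i) - -h i ^ 2 / (1 + lam) by field_simp; ring, Real.exp_sub]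
  field_simp

lemma exists_abs_mu_sub_eq {a b h : ℝ} (ha : a ∈ Set.Ioo (-1) 1) (hb : b ∈ Set.Ioo (-1) 1)
    (hh : 0 ≤ h) :
    ∃ c, |c - b| ≤ |a - b| ∧ |mu b h - mu a h| = gaussPairDensity c h * |a - b| := by
  rcases lt_trichotomy a b with hab | rfl | hab
  · obtain ⟨c, hc, hsub⟩ := exists_mu_sub_eq_gaussPairDensity_mul ha.1 hab hb.2 hh
    have hpos := gaussPairDensity_pos (h := h) ⟨ha.1.trans hc.1, hc.2.trans hb.2⟩
    refine ⟨c, ?_, ?_⟩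
    · rw [abs_of_neg (sub_neg.2 hc.2), abs_of_neg (sub_neg.2 hab)]
      linarith [hc.1]
    · rw [hsub, abs_mul, abs_of_pos hpos, abs_sub_comm]
  · exact ⟨a, by simp⟩
  · obtain ⟨c, hc, hsub⟩ := exists_mu_sub_eq_gaussPairDensity_mul hb.1 hab ha.2 hh
    have hpos := gaussPairDensity_pos (h := h) ⟨hb.1.trans hc.1, hc.2.trans ha.2⟩
    refine ⟨c, ?_, ?_⟩
    · rw [abs_of_pos (sub_pos.2 hc.1), abs_of_pos (sub_pos.2 hab)]
      linarith [hc.2]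
    · rw [abs_sub_comm, hsub, abs_mul, abs_of_pos hpos]

lemma le_standardized_gap {lam q c h eta M : ℝ} (hlam : lam ∈ Set.Ioo (-1) 1)
    (hq : q ∈ Set.Ioo (-1) 1) (hh : 0 < h) (hM : 0 < M)
    (hvar : 0 < M * (mu q h * (1 - mu q h)))
    (hgap : |mu lam h - mu q h| =
      gaussPairDensity c h * (eta * (1 + lam) / (h * √(M * gaussPairDensity lam h)))) :
    eta * (gaussPairDensity c h / gaussPairDensity lam h) * ((1 + lam) / (1 + q)) /
        √(gaussPairDensity q h / gaussPairDensity lam h) ≤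
      |M * mu lam h - M * mu q h| / √(M * (mu q h * (1 - mu q h))) := by
  have hDlam := gaussPairDensity_pos (h := h) hlam
  have hDq := gaussPairDensity_pos (h := h) hq
  have hlam1 : 0 < 1 + lam := by linarith [hlam.1]
  have hq1 : 0 < 1 + q := by linarith [hq.1]
  have hstd : √(M * (mu q h * (1 - mu q h))) ≤ (1 + q) / h * √(M * gaussPairDensity q h) := by
    rw [← Real.sqrt_sq (div_pos hq1 hh).le, ← Real.sqrt_mul (sq_nonneg _)]
    refine Real.sqrt_le_sqrt ?_
    calc M * (mu q h * (1 - mu q h)) ≤ M * mu q h := by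
          gcongr
          exact mul_le_of_le_one_right (mu_nonneg q h) (by linarith [mu_nonneg q h])
      _ ≤ M * (((1 + q) / h) ^ 2 * gaussPairDensity q h) := by
          gcongr
          exact mu_le_gaussPairDensity hq hh
      _ = ((1 + q) / h) ^ 2 * (M * gaussPairDensity q h) := by ring
  calc _ = |M * mu lam h - M * mu q h| / ((1 + q) / h * √(M * gaussPairDensity q h)) := by
        rw [← mul_sub, abs_mul, abs_of_pos hM, hgap, Real.sqrt_div hDq.le,
          Real.sqrt_mul hM.le, Real.sqrt_mul hM.le]
        have := Real.sqrt_pos.2 hDlam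
        have := Real.sqrt_pos.2 hDq
        have := Real.sqrt_pos.2 hM
        field_simp
        rw [Real.sq_sqrt hM.le, Real.sq_sqrt hDlam.le]
    _ ≤ _ := div_le_div_of_nonneg_left (abs_nonneg _) (Real.sqrt_pos.2 hvar) hstd

end StandardizedGap

section Margin

lemma exp_mul_le_mu {a b h : ℝ} (ha : -1 < a) (hab : a < b) (hb : b < 1) (hh : 0 ≤ h) :
    Real.exp (-h ^ 2 / (1 + a)) / (2 * Real.pi) * (b - a) ≤ mu b h := by
  obtain ⟨c, hc, hsub⟩ := exists_mu_sub_eq_gaussPairDensity_mul ha hab hb hh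
  have h1 : 0 < 1 + a := by linarith
  have hs := Real.sqrt_pos.2 (one_sub_sq_pos ⟨ha.trans hc.1, hc.2.trans hb⟩)
  have hs' : √(1 - c ^ 2) ≤ 1 := Real.sqrt_le_one.2 (sub_le_self 1 (sq_nonneg c))
  calc Real.exp (-h ^ 2 / (1 + a)) / (2 * Real.pi) * (b - a)
      ≤ gaussPairDensity c h * (b - a) := by
        refine mul_le_mul_of_nonneg_right (div_le_div₀ (Real.exp_pos _).le
          (Real.exp_le_exp.2 ?_) (by positivity) (mul_le_of_le_one_right (by positivity) hs'))
          (sub_pos.2 hab).le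
        rw [neg_div, neg_div]
        gcongr
        exact hc.1.le
    _ ≤ mu b h := by linarith [mu_nonneg a h]

variable {r lam eta : ℝ} {q : ℕ → ℝ}

lemma tendsto_natCast_mul_muM_atTop (hr : 0 < r) (hlam : lam ∈ Set.Ioo (2 * r - 1) 1)
    (hq : Tendsto q atTop (𝓝 lam)) :
    Tendsto (fun m : ℕ ↦ m * muM r m (q m)) atTop atTop := by
  obtain ⟨b, hb, hblam⟩ := exists_between hlam.1
  obtain ⟨a, ha, hab⟩ := exists_between hb
  have hexp : 0 < (a - (2 * r - 1)) / (1 + a) := div_pos (sub_pos.2 ha) (by linarith)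
  have hcoef : 0 < (b - a) / (2 * Real.pi) := div_pos (sub_pos.2 hab) Real.two_pi_pos
  refine tendsto_atTop_mono' atTop ?_ (((tendsto_rpow_atTop hexp).comp
    tendsto_natCast_atTop_atTop).const_mul_atTop hcoef)
  filter_upwards [hq.eventually_const_lt hblam, hq.eventually_lt_const hlam.2,
    eventually_gt_atTop 1] with m hbq hq1 hm
  have hh := hthr_pos hr hm
  have hle := exp_mul_le_mu (by linarith) hab (hblam.trans hlam.2) hh.le
  have hmono : mu b (hthr r m) ≤ muM r m (q m) :=
    monotoneOn_mu hh ⟨by linarith, by linarith⟩ ⟨by linarith, hq1.le⟩ hbq.le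
  calc (b - a) / (2 * Real.pi) * (m : ℝ) ^ ((a - (2 * r - 1)) / (1 + a))
      = m * (Real.exp (-hthr r m ^ 2 / (1 + a)) / (2 * Real.pi) * (b - a)) := by
        rw [← natCast_mul_exp_neg_hthr_sq_div hr.le (by linarith) (by omega)]
        ring
    _ ≤ m * muM r m (q m) := by
        gcongr
        exact hle.trans hmono

lemma tendsto_muM_zero (hr : 0 < r) (q : ℕ → ℝ) :
    Tendsto (fun m ↦ muM r m (q m)) atTop (𝓝 0) :=
  squeeze_zero (fun _ ↦ mu_nonneg _ _) (fun m ↦ mu_le_gaussTail (q m) (hthr r m))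
    (tendsto_gaussTail_atTop.comp (tendsto_hthr_atTop hr))

lemma tendsto_variance_muM_atTop (hr : 0 < r) (hlam : lam ∈ Set.Ioo (2 * r - 1) 1)
    (hq : Tendsto q atTop (𝓝 lam)) :
    Tendsto (fun m : ℕ ↦ m * (muM r m (q m) * (1 - muM r m (q m)))) atTop atTop := by
  simp_rw [← mul_assoc]
  refine (tendsto_natCast_mul_muM_atTop hr hlam hq).atTop_mul_pos one_pos ?_
  simpa using (tendsto_muM_zero hr q).const_sub 1

lemma tendsto_of_abs_sub_le_epsm (hr : 0 < r) (hlam : lam ∈ Set.Ioo (2 * r - 1) 1)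
    (hq : ∀ᶠ m in atTop, |q m - lam| ≤ epsm r lam eta m) : Tendsto q atTop (𝓝 lam) :=
  tendsto_sub_nhds_zero_iff.1 (squeeze_zero_norm' hq (tendsto_epsm hr hlam))

lemma tendsto_gaussPairDensity_div_of_abs_sub_le_epsm (hr : 0 < r)
    (hlam : lam ∈ Set.Ioo (2 * r - 1) 1)
    (hq : ∀ᶠ m in atTop, |q m - lam| ≤ epsm r lam eta m) :
    Tendsto (fun m ↦ gaussPairDensity (q m) (hthr r m) / gaussPairDensity lam (hthr r m)) atTop
      (𝓝 1) := by
  refine tendsto_gaussPairDensity_div ⟨by linarith [hlam.1], hlam.2⟩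
    (tendsto_of_abs_sub_le_epsm hr hlam hq)
    (squeeze_zero_norm' ?_ (tendsto_epsm_mul_hthr_sq (eta := eta) hr hlam))
  filter_upwards [hq] with m hm
  rw [Real.norm_eq_abs, abs_mul, abs_sq]
  gcongr

lemma eventually_le_standardized_gap (hr : 0 < r) (hlam : lam ∈ Set.Ioo (2 * r - 1) 1)
    (hq : ∀ᶠ m in atTop, |q m - lam| = epsm r lam eta m) {k : ℝ} (hk : k < eta) :
    ∀ᶠ m : ℕ in atTop, k ≤ |m * muM r m lam - m * muM r m (q m)| /
      √(m * (muM r m (q m) * (1 - muM r m (q m)))) := by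
  have hlam' : lam ∈ Set.Ioo (-1) 1 := ⟨by linarith [hlam.1], hlam.2⟩
  have hq' := hq.mono fun _ h ↦ h.le
  have hqlim := tendsto_of_abs_sub_le_epsm hr hlam hq'
  have hqmem : ∀ᶠ m in atTop, q m ∈ Set.Ioo (-1) 1 :=
    hqlim.eventually_mem (Ioo_mem_nhds hlam'.1 hlam'.2)
  obtain ⟨c, hc⟩ := (hqmem.mono fun m hm ↦
    exists_abs_mu_sub_eq hm hlam' (Real.sqrt_nonneg (2 * r * Real.log m))).choice
  have hcq : ∀ᶠ m in atTop, |c m - lam| ≤ epsm r lam eta m := by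
    filter_upwards [hc, hq] with m hcm hqm using hcm.1.trans_eq hqm
  have hratio : Tendsto (fun m ↦ (1 + lam) / (1 + q m)) atTop (𝓝 1) := by
    have h1 : 1 + lam ≠ 0 := by linarith [hlam'.1]
    have := (tendsto_const_nhds (x := 1 + lam)).div (hqlim.const_add 1) h1
    rwa [div_self h1] at this
  have hlim := ((tendsto_gaussPairDensity_div_of_abs_sub_le_epsm hr hlam hcq).const_mul eta).mul
    hratio |>.div (tendsto_gaussPairDensity_div_of_abs_sub_le_epsm hr hlam hq').sqrt (by simp)
  rw [Real.sqrt_one, mul_one, mul_one, div_one] at hlim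
  filter_upwards [hlim.eventually_const_lt hk, eventually_gt_atTop 1, hqmem, hc, hq,
    (tendsto_variance_muM_atTop hr hlam hqlim).eventually_gt_atTop 0] with m hkm hm hqm hcm hqeps
    hvar
  have hm' : 0 < m := one_pos.trans hm
  refine hkm.le.trans (le_standardized_gap hlam' hqm (hthr_pos hr hm) (Nat.cast_pos.2 hm') hvar ?_)
  rw [← epsm_eq hr.le hlam' hm', ← hqeps]
  exact hcm.2

end Margin

section BinomialAtMargin

/-- `muM r m lam` as an element of the unit interval: the probability that a Gaussian direction
activates both of two unit vectors with inner product `lam`. It is the parameter of the binomial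
law of `m` times the score. -/
def activationProb (r : ℝ) (m : ℕ) (lam : ℝ) : unitInterval :=
  ⟨muM r m lam, mu_nonneg _ _, mu_le_one _ _⟩

variable {r lam eta b : ℝ}

lemma eventually_binomial_sub_epsm_Ici_lt (hr : 0 < r) (hlam : lam ∈ Set.Ioo (2 * r - 1) 1)
    (heta : 0 < eta) (hb : gaussTail eta < b) :
    ∀ᶠ m : ℕ in atTop, Bin(ℝ, m, activationProb r m (lam - epsm r lam eta m)).real
      (Set.Ici (m * muM r m lam)) < b := by
  have hlam1 : -1 < lam := by linarith [hlam.1]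
  have heps : ∀ᶠ m in atTop, 0 < epsm r lam eta m :=
    (eventually_gt_atTop 1).mono fun _ ↦ epsm_pos hr ⟨hlam1, hlam.2⟩ heta
  have hq : ∀ᶠ m in atTop, |lam - epsm r lam eta m - lam| = epsm r lam eta m := by
    filter_upwards [heps] with m hm
    rw [sub_sub_cancel_left, abs_neg, abs_of_pos hm]
  have hqlim := tendsto_of_abs_sub_le_epsm hr hlam (hq.mono fun _ h ↦ h.le)
  have hvar := tendsto_variance_muM_atTop hr hlam hqlim
  have hgap (k : ℝ) (hk : k < eta) : ∀ᶠ m : ℕ in atTop,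
      k ≤ (m * muM r m lam - m * muM r m (lam - epsm r lam eta m)) /
        √(m * (muM r m (lam - epsm r lam eta m) * (1 - muM r m (lam - epsm r lam eta m)))) := by
    filter_upwards [eventually_le_standardized_gap hr hlam hq hk, heps, eventually_gt_atTop 1,
      hqlim.eventually_const_lt hlam1] with m hkm hepsm hm hqm
    rwa [abs_of_nonneg] at hkm
    rw [← mul_sub]
    refine mul_nonneg (Nat.cast_nonneg m) (sub_nonneg.2 ?_)
    exact monotoneOn_mu (hthr_pos hr hm) ⟨hqm.le, by linarith [hlam.2]⟩ ⟨hlam1.le, hlam.2.le⟩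
      (by linarith)
  filter_upwards [eventually_real_stdBinomial_Ici_lt
    (p := fun m ↦ activationProb r m (lam - epsm r lam eta m)) hvar hgap hb,
    hvar.eventually_gt_atTop 0] with m hm hvarm
  exact (real_stdBinomial_Ici hvarm _).symm.trans_lt hm

lemma eventually_binomial_add_epsm_Iio_lt (hr : 0 < r) (hlam : lam ∈ Set.Ioo (2 * r - 1) 1)
    (heta : 0 < eta) (hb : gaussTail eta < b) :
    ∀ᶠ m : ℕ in atTop, Bin(ℝ, m, activationProb r m (lam + epsm r lam eta m)).real
      (Set.Iio (m * muM r m lam)) < b := by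
  have hlam1 : -1 < lam := by linarith [hlam.1]
  have heps : ∀ᶠ m in atTop, 0 < epsm r lam eta m :=
    (eventually_gt_atTop 1).mono fun _ ↦ epsm_pos hr ⟨hlam1, hlam.2⟩ heta
  have hq : ∀ᶠ m in atTop, |lam + epsm r lam eta m - lam| = epsm r lam eta m := by
    filter_upwards [heps] with m hm
    rw [add_sub_cancel_left, abs_of_pos hm]
  have hqlim := tendsto_of_abs_sub_le_epsm hr hlam (hq.mono fun _ h ↦ h.le)
  have hvar := tendsto_variance_muM_atTop hr hlam hqlim
  have hgap (k : ℝ) (hk : k < eta) : ∀ᶠ m : ℕ in atTop,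
      (m * muM r m lam - m * muM r m (lam + epsm r lam eta m)) /
        √(m * (muM r m (lam + epsm r lam eta m) * (1 - muM r m (lam + epsm r lam eta m)))) ≤
        -k := by
    filter_upwards [eventually_le_standardized_gap hr hlam hq hk, heps, eventually_gt_atTop 1,
      hqlim.eventually_lt_const hlam.2] with m hkm hepsm hm hqm
    rwa [abs_of_nonpos, neg_div, le_neg] at hkm
    rw [← mul_sub]
    refine mul_nonpos_of_nonneg_of_nonpos (Nat.cast_nonneg m) (sub_nonpos.2 ?_)
    exact monotoneOn_mu (hthr_pos hr hm) ⟨hlam1.le, hlam.2.le⟩ ⟨by linarith, hqm.le⟩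
      (by linarith)
  filter_upwards [eventually_real_stdBinomial_Iio_lt
    (p := fun m ↦ activationProb r m (lam + epsm r lam eta m)) hvar hgap hb,
    hvar.eventually_gt_atTop 0] with m hm hvarm
  exact (real_stdBinomial_Iio hvarm _).symm.trans_lt hm

end BinomialAtMargin

section Corpus

variable {d m n : ℕ} {r lam b e : ℝ} {x y : Fin d → ℝ}

instance (d m : ℕ) : IsProbabilityMeasure (Prob d m) := by
  unfold Prob
  infer_instance

lemma measurable_score (d m : ℕ) (r : ℝ) (x y : Fin d → ℝ) : Measurable (score d m r x y) := by
  have hmeas (z : Fin d → ℝ) (i : Fin m) :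
      Measurable fun ω : Fin m → Fin d → ℝ ↦ if hthr r m ≤ dotp (ω i) z then (1 : ℝ) else 0 :=
    Measurable.ite (measurableSet_le measurable_const
      ((measurable_dotp z).comp (measurable_pi_apply i))) measurable_const measurable_const
  unfold score
  exact (Finset.measurable_fun_sum _ fun i _ ↦ (hmeas x i).mul (hmeas y i)).const_mul _

lemma map_natCast_mul_score_eq_binomial (hx : unitVec x) (hy : unitVec y) (hm : 0 < m) :
    (Prob d m).map (fun ω ↦ m * score d m r x y ω) =
      Bin(ℝ, m, activationProb r m (dotp x y)) := by
  have hm' : (m : ℝ) ≠ 0 := by positivity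
  set A : Set (Fin d → ℝ) := {a | hthr r m ≤ dotp a x ∧ hthr r m ≤ dotp a y}
  have hA : MeasurableSet A :=
    (measurableSet_le measurable_const (measurable_dotp x)).inter
      (measurableSet_le measurable_const (measurable_dotp y))
  rw [← map_sum_indicator_pi_eq_binomial _ hA (real_dotp_ge_eq_mu hx hy _) m, Prob]
  refine congrArg (Measure.map · _) (funext fun ω ↦ ?_)
  rw [score, one_div, mul_inv_cancel_left₀ hm']
  refine Finset.sum_congr rfl fun i _ ↦ ?_
  simp only [A, Set.indicator_apply, Set.mem_ofPred_eq, ite_and, Pi.one_apply]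
  split_ifs <;> norm_num

lemma real_le_score (hx : unitVec x) (hy : unitVec y) (hm : 0 < m) (c : ℝ) :
    (Prob d m).real {ω | c ≤ score d m r x y ω} =
      Bin(ℝ, m, activationProb r m (dotp x y)).real (Set.Ici (m * c)) := by
  rw [← map_natCast_mul_score_eq_binomial hx hy hm,
    map_measureReal_apply ((measurable_score d m r x y).const_mul _) measurableSet_Ici]
  congr 1 with ω
  exact (mul_le_mul_iff_right₀ (by positivity : (0 : ℝ) < m)).symm

lemma real_not_le_score (hx : unitVec x) (hy : unitVec y) (hm : 0 < m) (c : ℝ) :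
    (Prob d m).real {ω | ¬c ≤ score d m r x y ω} =
      Bin(ℝ, m, activationProb r m (dotp x y)).real (Set.Iio (m * c)) := by
  have hmeas : MeasurableSet {ω | c ≤ score d m r x y ω} :=
    measurableSet_le measurable_const (measurable_score d m r x y)
  rw [← Set.compl_ofPred, probReal_compl_eq_one_sub hmeas, real_le_score hx hy hm, ← Set.compl_Ici,
    probReal_compl_eq_one_sub measurableSet_Ici]

lemma integral_sum_ite_and {ι Ω : Type*} [Fintype ι] [MeasurableSpace Ω] (P : Measure Ω)
    [IsFiniteMeasure P] (a : ι → Prop) [DecidablePred a] {s : ι → Ω → Prop}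
    [∀ i ω, Decidable (s i ω)]
    (hs : ∀ i, MeasurableSet {ω | s i ω}) :
    ∫ ω, ∑ i, (if a i ∧ s i ω then (1 : ℝ) else 0) ∂P =
      ∑ i, if a i then P.real {ω | s i ω} else 0 := by
  have heq (i : ι) : (fun ω ↦ if a i ∧ s i ω then (1 : ℝ) else 0) =
      if a i then {ω | s i ω}.indicator 1 else 0 := by
    funext ω
    by_cases ha : a i <;> simp [ha, Set.indicator_apply]
  have hint (i : ι) : Integrable (fun ω ↦ if a i ∧ s i ω then (1 : ℝ) else 0) P := by
    rw [heq]
    split_ifs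
    · exact (integrable_const 1).indicator (hs i)
    · exact integrable_zero _ _ _
  rw [integral_finsetSum _ fun i _ ↦ hint i]
  refine Finset.sum_congr rfl fun i _ ↦ ?_
  rw [heq]
  split_ifs
  · exact integral_indicator_one (hs i)
  · exact integral_zero _ _

lemma activationProb_mono (hr : 0 < r) (hm : 1 < m) {p q : ℝ} (hp : -1 ≤ p) (hpq : p ≤ q)
    (hq : q ≤ 1) : activationProb r m p ≤ activationProb r m q :=
  monotoneOn_mu (hthr_pos hr hm) ⟨hp, hpq.trans hq⟩ ⟨hp.trans hpq, hq⟩ hpq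

lemma errorProb_le (hr : 0 < r) (hm : 1 < m) (he : 0 < e)
    (hx : unitVec x) (hy : unitVec y) (hlam : lam ∈ Set.Icc (-1) 1)
    (hI : Bin(ℝ, m, activationProb r m (lam - e)).real (Set.Ici (m * muM r m lam)) ≤ b)
    (hII : Bin(ℝ, m, activationProb r m (lam + e)).real (Set.Iio (m * muM r m lam)) ≤ b) :
    (if dotp x y ≤ lam - e then (Prob d m).real {ω | muM r m lam ≤ score d m r x y ω} else 0) +
      (if lam + e ≤ dotp x y then (Prob d m).real {ω | ¬muM r m lam ≤ score d m r x y ω} else 0) ≤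
      b := by
  have hm' : 0 < m := one_pos.trans hm
  obtain ⟨hdot, hdot'⟩ := abs_le.1 ((sq_le_one_iff_abs_le_one _).1 (dotp_sq_le_one hx hy))
  rw [real_le_score hx hy hm', real_not_le_score hx hy hm']
  split_ifs with h h' h'
  · linarith
  · rw [add_zero]
    exact (map_cast_binomial_real_le_of_isUpperSet m
      (activationProb_mono hr hm hdot h (by linarith [hlam.2])) (isUpperSet_Ici _)).trans hI
  · rw [zero_add]
    exact (map_cast_binomial_real_le_of_isLowerSet m
      (activationProb_mono hr hm (by linarith [hlam.1]) h' hdot') (isLowerSet_Iio _)).trans hII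
  · rw [add_zero]
    exact measureReal_nonneg.trans hI

lemma integral_NI_add_integral_NII_le (hr : 0 < r) (hm : 1 < m) (he : 0 < e)
    (hy : unitVec y) (hlam : lam ∈ Set.Icc (-1) 1)
    (hI : Bin(ℝ, m, activationProb r m (lam - e)).real (Set.Ici (m * muM r m lam)) ≤ b)
    (hII : Bin(ℝ, m, activationProb r m (lam + e)).real (Set.Iio (m * muM r m lam)) ≤ b)
    {X : Fin n → Fin d → ℝ} (hX : ∀ i, unitVec (X i)) :
    (∫ ω, NI d m n r lam e y X ω ∂(Prob d m)) + (∫ ω, NII d m n r lam e y X ω ∂(Prob d m)) ≤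
      b * n := by
  have hmeas (i : Fin n) : MeasurableSet {ω | muM r m lam ≤ score d m r (X i) y ω} :=
    measurableSet_le measurable_const (measurable_score d m r (X i) y)
  have hmeas' (i : Fin n) : MeasurableSet {ω | ¬muM r m lam ≤ score d m r (X i) y ω} :=
    (hmeas i).compl
  unfold NI NII
  rw [integral_sum_ite_and _ _ hmeas, integral_sum_ite_and _ _ hmeas',
    ← Finset.sum_add_distrib]
  calc _ ≤ ∑ _i : Fin n, b :=
        Finset.sum_le_sum fun i _ ↦ errorProb_le hr hm he (hX i) hy hlam hI hII
    _ = b * n := by simp [mul_comm]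

lemma iSup_errorRate_nonneg (d m n : ℕ) (r lam e : ℝ) (y : Fin d → ℝ) :
    0 ≤ ⨆ X : {X : Fin n → Fin d → ℝ // ∀ i, unitVec (X i)},
      ((∫ ω, NI d m n r lam e y X.1 ω ∂(Prob d m)) +
        (∫ ω, NII d m n r lam e y X.1 ω ∂(Prob d m))) / n := by
  have hite (p : Prop) [Decidable p] : (0 : ℝ) ≤ if p then 1 else 0 := by split_ifs <;> norm_num
  exact Real.iSup_nonneg fun X ↦ div_nonneg (add_nonneg
    (integral_nonneg fun ω ↦ Finset.sum_nonneg fun i _ ↦ hite _)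
    (integral_nonneg fun ω ↦ Finset.sum_nonneg fun i _ ↦ hite _)) n.cast_nonneg

end Corpus

lemma gaussTail_two_mul_sqrt_log_le {n : ℕ} (hn : 2 ≤ n) :
    gaussTail (2 * √(Real.log n)) ≤ 1 / ((n : ℝ) ^ 2 * √(8 * Real.pi * Real.log n)) := by
  have hlog : 0 < Real.log n := Real.log_pos (by exact_mod_cast hn)
  have hexp : Real.exp (-(2 * √(Real.log n)) ^ 2 / 2) = ((n : ℝ) ^ 2)⁻¹ := by
    rw [mul_pow, Real.sq_sqrt hlog.le, ← Real.exp_log (by positivity : (0 : ℝ) < n ^ 2),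
      Real.log_pow, ← Real.exp_neg]
    congr 1
    push_cast
    ring
  have hprod : √(8 * Real.pi * Real.log n) = √(2 * Real.pi) * (2 * √(Real.log n)) := by
    rw [← Real.sqrt_sq zero_le_two, ← Real.sqrt_mul (by positivity), Real.sqrt_sq zero_le_two,
      ← Real.sqrt_mul (by positivity)]
    ring_nf
  calc gaussTail (2 * √(Real.log n))
      ≤ gaussianPDFReal 0 1 (2 * √(Real.log n)) / (2 * √(Real.log n)) :=
        gaussTail_le_gaussianPDFReal_div (by positivity)
    _ = 1 / ((n : ℝ) ^ 2 * √(8 * Real.pi * Real.log n)) := by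
        rw [gaussianPDFReal_zero_one, hexp, hprod]
        field_simp

theorem stmt3_general {d : ℕ} {r : ℝ} (hr : 0 < r) {y : Fin d → ℝ} (hy : unitVec y) {lam : ℝ}
    (hlam : lam ∈ Set.Ioo (2 * r - 1) 1) {eta : ℝ} (heta : 0 < eta) {n : ℕ} (hn : 0 < n) :
    limsup (fun m : ℕ ↦ ⨆ X : {X : Fin n → Fin d → ℝ // ∀ i, unitVec (X i)},
      ((∫ ω, NI d m n r lam (epsm r lam eta m) y X.1 ω ∂(Prob d m)) +
        (∫ ω, NII d m n r lam (epsm r lam eta m) y X.1 ω ∂(Prob d m))) / n) atTop ≤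
      gaussTail eta := by
  have hlam' : lam ∈ Set.Ioo (-1) 1 := ⟨by linarith [hlam.1], hlam.2⟩
  have hbdd := isCoboundedUnder_le_of_le atTop
    fun m ↦ iSup_errorRate_nonneg d m n r lam (epsm r lam eta m) y
  refine le_of_forall_gt_imp_ge_of_dense fun b hb ↦ limsup_le_of_le hbdd ?_
  filter_upwards [eventually_gt_atTop 1, eventually_binomial_sub_epsm_Ici_lt hr hlam heta hb,
    eventually_binomial_add_epsm_Iio_lt hr hlam heta hb] with m hm hI hII
  refine Real.iSup_le (fun X ↦ (div_le_iff₀ (Nat.cast_pos.2 hn)).2 ?_)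
    ((gaussTail_nonneg eta).trans hb.le)
  exact integral_NI_add_integral_NII_le hr hm (epsm_pos hr hlam' heta hm) hy
    (Set.Ioo_subset_Icc_self hlam') hI.le hII.le X.2

/-- Main theorem, asymptotic version, with `η = 2√(log n)`. -/
theorem stmt3 {d : ℕ} (r : ℝ) (hr : r ∈ Set.Ioo (0 : ℝ) 1)
    (y : Fin d → ℝ) (hy : unitVec y)
    (lam : ℝ) (hlam : lam ∈ Set.Ioo (2 * r - 1) 1) (hlam0 : 0 < lam)
    (n : ℕ) (hn : 2 ≤ n) :
    Filter.limsup (fun m : ℕ =>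
        ⨆ X : {X : Fin n → Fin d → ℝ // ∀ i, unitVec (X i)},
          ((∫ ω, NI d m n r lam (epsm r lam (2 * Real.sqrt (Real.log n)) m) y X.1 ω ∂(Prob d m)) +
           (∫ ω, NII d m n r lam (epsm r lam (2 * Real.sqrt (Real.log n)) m) y X.1 ω ∂(Prob d m))) / n)
      atTop ≤ 1 / ((n : ℝ) ^ 2 * Real.sqrt (8 * Real.pi * Real.log n)) := by
  have hlog : 0 < Real.log n := Real.log_pos (by exact_mod_cast hn)
  exact (stmt3_general hr.1 hy hlam (by positivity) (by omega)).trans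
    (gaussTail_two_mul_sqrt_log_le hn)

end
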